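/- Every function θ ∈ S⁰(N⁻, N⁺) admits a closely connected conservative realization: there exist a complex separable Hilbert space X and bounded operators A : X → X, B : N⁻ → X, C : X → N⁺, D : N⁻ → N⁺ such that G = [[A, B], [C, D]] : X ⊕ N⁻ → X ⊕ N⁺ is unitary, X equals the closed linear span of the vectors p(A, A*)x where p runs over all finite words in A and A* and x runs over B N⁻ ∪ C* N⁺, and θ(z) = zD + zC(I_X − zA)⁻¹zB for all z ∈ D. Moreover this realization is unique up to unitary similarity: if (A′, B′, C′, D′; X′) is another such closely connected conservative realization of θ, then D′ = D and there is a unitary operator U : X → X′ with A′U = UA, B′ = UB, and C′U = C. -/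

import Mathlib

open ContinuousLinearMap Metric

noncomputable section

/-- The block operator `[[A, B], [C, D]] : X ⊕ N⁻ → X ⊕ N⁺` (Hilbert space direct sum). -/
def blockOp {X Nm Np : Type*}
    [NormedAddCommGroup X] [InnerProductSpace ℂ X]
    [NormedAddCommGroup Nm] [InnerProductSpace ℂ Nm]
    [NormedAddCommGroup Np] [InnerProductSpace ℂ Np]
    (A : X →L[ℂ] X) (B : Nm →L[ℂ] X) (C : X →L[ℂ] Np) (D : Nm →L[ℂ] Np) :
    WithLp 2 (X × Nm) →L[ℂ] WithLp 2 (X × Np) :=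
  ((WithLp.prodContinuousLinearEquiv 2 ℂ X Np).symm :
      (X × Np) →L[ℂ] WithLp 2 (X × Np)) ∘L
    ((A ∘L ContinuousLinearMap.fst ℂ X Nm + B ∘L ContinuousLinearMap.snd ℂ X Nm).prod
      (C ∘L ContinuousLinearMap.fst ℂ X Nm + D ∘L ContinuousLinearMap.snd ℂ X Nm)) ∘L
    (WithLp.prodContinuousLinearEquiv 2 ℂ X Nm : WithLp 2 (X × Nm) →L[ℂ] (X × Nm))

/-- A bounded operator between Hilbert spaces is unitary: `G*G = I` and `GG* = I`. -/
def IsUnitaryOp {E F : Type*}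
    [NormedAddCommGroup E] [InnerProductSpace ℂ E] [CompleteSpace E]
    [NormedAddCommGroup F] [InnerProductSpace ℂ F] [CompleteSpace F]
    (G : E →L[ℂ] F) : Prop :=
  adjoint G ∘L G = ContinuousLinearMap.id ℂ E ∧
    G ∘L adjoint G = ContinuousLinearMap.id ℂ F

/-- Close connectedness of a one-parametric system: `X` is the closed linear span of the
vectors `p(A, A*) x` where `p` runs over all finite words in `A, A*` and
`x ∈ B N⁻ ∪ C* N⁺`. -/
def CloselyConnected1 {X Nm Np : Type*}
    [NormedAddCommGroup X] [InnerProductSpace ℂ X] [CompleteSpace X]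
    [NormedAddCommGroup Nm] [InnerProductSpace ℂ Nm] [CompleteSpace Nm]
    [NormedAddCommGroup Np] [InnerProductSpace ℂ Np] [CompleteSpace Np]
    (A : X →L[ℂ] X) (B : Nm →L[ℂ] X) (C : X →L[ℂ] Np) : Prop :=
  (Submodule.span ℂ {x : X | ∃ (w : List Bool) (y : X),
      ((∃ u, y = B u) ∨ (∃ v, y = adjoint C v)) ∧
      x = ((w.map fun b => cond b A (adjoint A)).prod) y}).topologicalClosure = ⊤

/-- `(A, B, C, D; X)` is a closely connected conservative realization of `θ`:
the system matrix is unitary, the system is closely connected, and on the open unit disc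
`I_X − zA` is invertible with `θ(z) = zD + zC (I_X − zA)⁻¹ zB`. -/
def IsCCConservativeRealization {Nm Np : Type*}
    [NormedAddCommGroup Nm] [InnerProductSpace ℂ Nm] [CompleteSpace Nm]
    [NormedAddCommGroup Np] [InnerProductSpace ℂ Np] [CompleteSpace Np]
    (θ : ℂ → (Nm →L[ℂ] Np))
    (X : Type*) [NormedAddCommGroup X] [InnerProductSpace ℂ X] [CompleteSpace X]
    (A : X →L[ℂ] X) (B : Nm →L[ℂ] X) (C : X →L[ℂ] Np) (D : Nm →L[ℂ] Np) : Prop :=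
  IsUnitaryOp (blockOp A B C D) ∧ CloselyConnected1 A B C ∧
    ∀ z ∈ ball (0 : ℂ) 1, IsUnit ((1 : X →L[ℂ] X) - z • A) ∧
      θ z = z • D + (z • C) ∘L (Ring.inverse (1 - z • A)) ∘L (z • B)

/-!
*Existence.* By the Schwarz lemma `θ z = z • τ z` with `τ` again a Schur function, so the Toeplitz
matrix `T` of the Taylor coefficients of `τ` is a contraction. Equivalently, the block kernel with
identity operators on the diagonal and `T`, `T*` off it is positive semidefinite, hence a Gram
matrix: some Hilbert space contains two orthonormal two-sided sequences of channels, incoming and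
outgoing, with these Taylor coefficients as cross-correlation, and a unitary shift moves both
sequences one step. The state space is the orthogonal complement of the inputs still to come and
the outputs already emitted, which are mutually orthogonal because `τ` has no Taylor coefficients
of negative index. The shift trades one incoming channel for one outgoing channel, so its blocks
relative to the state space form a unitary colligation. Time reversal exchanges inputs with outputs
and the colligation with its adjoint, so each fact has to be shown only once.

*Uniqueness.* For a unitary colligation, `A A* = 1 - B B*` and `A C* = -B D*` reduce all words in
`A` and `A*` to the vectors `Aⁿ B u` and `A*ⁿ C* v`, and the Gram matrix of these vectors is
determined by `D, CB, CAB, …`, that is, by the Taylor coefficients of `θ`.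
-/

open scoped InnerProductSpace

section BlockOperators

variable {E F X Nm Np : Type*}
  [NormedAddCommGroup E] [InnerProductSpace ℂ E] [CompleteSpace E]
  [NormedAddCommGroup F] [InnerProductSpace ℂ F] [CompleteSpace F]
  [NormedAddCommGroup X] [InnerProductSpace ℂ X]
  [NormedAddCommGroup Nm] [InnerProductSpace ℂ Nm]
  [NormedAddCommGroup Np] [InnerProductSpace ℂ Np]
  {A : X →L[ℂ] X} {B : Nm →L[ℂ] X} {C : X →L[ℂ] Np} {D : Nm →L[ℂ] Np}

theorem IsUnitaryOp.adjoint {G : E →L[ℂ] F} (hG : IsUnitaryOp G) : IsUnitaryOp (adjoint G) := by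
  refine ⟨?_, ?_⟩ <;> rw [adjoint_adjoint]
  exacts [hG.2, hG.1]

theorem isUnitaryOp_of_norm_map {G : E →L[ℂ] F} (hG : ∀ x, ‖G x‖ = ‖x‖)
    (hG' : ∀ y, ‖ContinuousLinearMap.adjoint G y‖ = ‖y‖) : IsUnitaryOp G := by
  refine ⟨(norm_map_iff_adjoint_comp_self G).1 hG, ?_⟩
  have := (norm_map_iff_adjoint_comp_self (ContinuousLinearMap.adjoint G)).1 hG'
  rwa [adjoint_adjoint] at this

@[simp]
theorem blockOp_toLp (x : X) (u : Nm) :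
    blockOp A B C D (WithLp.toLp 2 (x, u)) = WithLp.toLp 2 (A x + B u, C x + D u) := by
  simp [blockOp]

variable [CompleteSpace X] [CompleteSpace Nm] [CompleteSpace Np]

theorem adjoint_blockOp :
    adjoint (blockOp A B C D) = blockOp (adjoint A) (adjoint C) (adjoint B) (adjoint D) := by
  symm
  rw [eq_adjoint_iff]
  rintro ⟨x, v⟩ ⟨y, u⟩
  simp only [blockOp_toLp, WithLp.prod_inner_apply, inner_add_left, inner_add_right,
    adjoint_inner_left]
  ring

theorem IsUnitaryOp.dual (h : IsUnitaryOp (blockOp A B C D)) :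
    IsUnitaryOp (blockOp (ContinuousLinearMap.adjoint A) (ContinuousLinearMap.adjoint C)
      (ContinuousLinearMap.adjoint B) (ContinuousLinearMap.adjoint D)) :=
  adjoint_blockOp (A := A) (B := B) (C := C) (D := D) ▸ h.adjoint

theorem IsUnitaryOp.inner_block (h : IsUnitaryOp (blockOp A B C D)) (x y : X) (u w : Nm) :
    ⟪A x + B u, A y + B w⟫_ℂ + ⟪C x + D u, C y + D w⟫_ℂ = ⟪x, y⟫_ℂ + ⟪u, w⟫_ℂ := by
  simpa only [blockOp_toLp, WithLp.prod_inner_apply] using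
    (inner_map_map_iff_adjoint_comp_self (blockOp A B C D)).2 h.1
      (WithLp.toLp 2 (x, u)) (WithLp.toLp 2 (y, w))

theorem IsUnitaryOp.adjoint_block_fst (h : IsUnitaryOp (blockOp A B C D)) (x : X) (u : Nm) :
    ContinuousLinearMap.adjoint A (A x + B u) + ContinuousLinearMap.adjoint C (C x + D u) = x := by
  refine ext_inner_right ℂ fun y => ?_
  simpa only [map_zero, add_zero, inner_zero_right, inner_add_left, adjoint_inner_left] using
    h.inner_block x y u 0

theorem IsUnitaryOp.norm_le_one (h : IsUnitaryOp (blockOp A B C D)) : ‖A‖ ≤ 1 := by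
  refine opNorm_le_bound _ zero_le_one fun x => ?_
  have hx : ‖A x‖ ^ 2 + ‖C x‖ ^ 2 = ‖x‖ ^ 2 := by
    have := h.inner_block x x 0 0
    rw [inner_zero_left] at this
    simp only [map_zero, add_zero, inner_self_eq_norm_sq_to_K] at this
    exact_mod_cast this
  rw [one_mul]
  exact le_of_sq_le_sq (by linarith [sq_nonneg ‖C x‖]) (norm_nonneg x)

theorem isUnitaryOp_blockOp (h : ∀ x u, ‖A x + B u‖ ^ 2 + ‖C x + D u‖ ^ 2 = ‖x‖ ^ 2 + ‖u‖ ^ 2)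
    (h' : ∀ x v, ‖adjoint A x + adjoint C v‖ ^ 2 + ‖adjoint B x + adjoint D v‖ ^ 2 =
      ‖x‖ ^ 2 + ‖v‖ ^ 2) : IsUnitaryOp (blockOp A B C D) := by
  refine isUnitaryOp_of_norm_map ?_ ?_
  · rintro ⟨x, u⟩
    rw [blockOp_toLp, WithLp.prod_norm_eq_of_L2, WithLp.prod_norm_eq_of_L2]
    exact congrArg Real.sqrt (h x u)
  · rintro ⟨x, v⟩
    rw [adjoint_blockOp, blockOp_toLp, WithLp.prod_norm_eq_of_L2, WithLp.prod_norm_eq_of_L2]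
    exact congrArg Real.sqrt (h' x v)

end BlockOperators

section MarkovParameters

section Normed

variable {X E F : Type*}
  [NormedAddCommGroup X] [NormedSpace ℂ X]
  [NormedAddCommGroup E] [NormedSpace ℂ E]
  [NormedAddCommGroup F] [NormedSpace ℂ F]
  (A : X →L[ℂ] X) (B : E →L[ℂ] X) (C : X →L[ℂ] F) (D : E →L[ℂ] F)

/-- The Markov parameters `D, CB, CAB, CA²B, …` of a linear system: the Taylor coefficients at `0`
of `z ↦ D + z C (1 - z A)⁻¹ B`. -/
def markov : ℕ → (E →L[ℂ] F)
  | 0 => D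
  | k + 1 => C ∘L (A ^ k) ∘L B

theorem hasSum_smul_markov [CompleteSpace X] {z : ℂ} (hz : ‖z • A‖ < 1) :
    HasSum (fun k : ℕ => z ^ k • markov A B C D k)
      (D + z • C ∘L Ring.inverse (1 - z • A) ∘L B) := by
  have hgeom : HasSum (fun k : ℕ => (z • A) ^ k) (Ring.inverse (1 - z • A)) := by
    rw [NormedRing.inverse_one_sub _ hz]
    exact (summable_geometric_of_norm_lt_one hz).hasSum
  have hcomp := (hgeom.mapL ((compL ℂ E X F C) ∘L (compL ℂ E X X).flip B)).const_smul z
  have hterm : ∀ k : ℕ, z • (C ∘L ((z • A) ^ k) ∘L B) = z ^ (k + 1) • markov A B C D (k + 1) := by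
    intro k
    ext u
    simp [markov, smul_pow, smul_smul, pow_succ']
  rw [← hasSum_nat_add_iff' 1, Finset.sum_range_one, pow_zero, one_smul, markov,
    add_sub_cancel_left]
  exact hcomp.congr_fun fun k => (hterm k).symm

end Normed

variable {X E F : Type*}
  [NormedAddCommGroup X] [InnerProductSpace ℂ X] [CompleteSpace X]
  [NormedAddCommGroup E] [InnerProductSpace ℂ E]
  [NormedAddCommGroup F] [InnerProductSpace ℂ F] [CompleteSpace F]
  (A : X →L[ℂ] X) (B : E →L[ℂ] X) (C : X →L[ℂ] F) (D : E →L[ℂ] F)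

theorem inner_pow_adjoint_pow (m n : ℕ) (u : E) (v : F) :
    ⟪(A ^ m) (B u), (adjoint A ^ n) (adjoint C v)⟫_ℂ = ⟪markov A B C D (n + m + 1) u, v⟫_ℂ := by
  rw [← star_eq_adjoint A, ← star_pow, star_eq_adjoint, adjoint_inner_right, adjoint_inner_right,
    markov, pow_add]
  rfl

variable [CompleteSpace E]

theorem markov_adjoint (k : ℕ) :
    markov (adjoint A) (adjoint C) (adjoint B) (adjoint D) k = adjoint (markov A B C D k) := by
  cases k with
  | zero => rfl
  | succ k =>
    simp only [markov, adjoint_comp, ← star_eq_adjoint, star_pow]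
    rfl

end MarkovParameters

section UnitaryEquivalence

variable {ι H H' : Type*}
  [NormedAddCommGroup H] [InnerProductSpace ℂ H] [CompleteSpace H]
  [NormedAddCommGroup H'] [InnerProductSpace ℂ H'] [CompleteSpace H']

theorem exists_linearIsometryEquiv_of_inner_eq {φ : ι → H} {ψ : ι → H'}
    (hinner : ∀ i j, ⟪φ i, φ j⟫_ℂ = ⟪ψ i, ψ j⟫_ℂ)
    (hφ : Dense (Submodule.span ℂ (Set.range φ) : Set H))
    (hψ : Dense (Submodule.span ℂ (Set.range ψ) : Set H')) :
    ∃ U : H ≃ₗᵢ[ℂ] H', ∀ i, U (φ i) = ψ i := by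
  have hφ' : DenseRange (Finsupp.linearCombination ℂ φ) := by
    rwa [← Finsupp.range_linearCombination] at hφ
  have hψ' : DenseRange (Finsupp.linearCombination ℂ ψ) := by
    rwa [← Finsupp.range_linearCombination] at hψ
  have hnorm (a : ι →₀ ℂ) : ‖Finsupp.linearCombination ℂ ψ (LinearEquiv.refl ℂ (ι →₀ ℂ) a)‖ =
      ‖Finsupp.linearCombination ℂ φ a‖ := by
    rw [LinearEquiv.refl_apply, norm_eq_sqrt_re_inner (𝕜 := ℂ), norm_eq_sqrt_re_inner (𝕜 := ℂ)]
    simp only [Finsupp.linearCombination_apply, Finsupp.sum, sum_inner, inner_sum,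
      inner_smul_left, inner_smul_right, hinner]
  refine ⟨(LinearEquiv.refl ℂ (ι →₀ ℂ)).extendOfIsometry _ _ hφ' hψ' hnorm, fun i => ?_⟩
  simpa using LinearEquiv.extendOfIsometry_eq (LinearEquiv.refl ℂ (ι →₀ ℂ)) _ _ hφ' hψ' hnorm
    (Finsupp.single i 1)

end UnitaryEquivalence

section UniquenessOfRealization

variable {X X' E F : Type*}
  [NormedAddCommGroup X] [InnerProductSpace ℂ X] [CompleteSpace X]
  [NormedAddCommGroup X'] [InnerProductSpace ℂ X'] [CompleteSpace X']
  [NormedAddCommGroup E] [InnerProductSpace ℂ E] [CompleteSpace E]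
  [NormedAddCommGroup F] [InnerProductSpace ℂ F] [CompleteSpace F]
  {A : X →L[ℂ] X} {B : E →L[ℂ] X} {C : X →L[ℂ] F} {D : E →L[ℂ] F}
  {A' : X' →L[ℂ] X'} {B' : E →L[ℂ] X'} {C' : X' →L[ℂ] F} {D' : E →L[ℂ] F}

theorem IsUnitaryOp.map_adjoint_output (h : IsUnitaryOp (blockOp A B C D)) (v : F) :
    A (ContinuousLinearMap.adjoint C v) = -B (ContinuousLinearMap.adjoint D v) := by
  have := h.dual.adjoint_block_fst 0 v
  simp only [map_zero, zero_add, adjoint_adjoint] at this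
  exact eq_neg_of_add_eq_zero_left this

theorem IsUnitaryOp.map_adjoint_state (h : IsUnitaryOp (blockOp A B C D)) (x : X) :
    A (ContinuousLinearMap.adjoint A x) = x - B (ContinuousLinearMap.adjoint B x) := by
  have := h.dual.adjoint_block_fst x 0
  simp only [map_zero, add_zero, adjoint_adjoint] at this
  exact eq_sub_of_add_eq this

variable (A B C) in
/-- The family of vectors `Aⁿ B u` and `A*ⁿ C* v`. For a conservative system these already span
everything that words in `A` and `A*` generate from the ranges of `B` and `C*`. -/
def krylovFamily : (ℕ × E) ⊕ (ℕ × F) → X :=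
  Sum.elim (fun p => (A ^ p.1) (B p.2)) (fun p => (adjoint A ^ p.1) (adjoint C p.2))

theorem range_krylovFamily_adjoint :
    Set.range (krylovFamily (adjoint A) (adjoint C) (adjoint B)) =
      Set.range (krylovFamily A B C) := by
  simp only [krylovFamily, Set.Sum.elim_range, adjoint_adjoint, Set.union_comm]

theorem IsUnitaryOp.map_mem_span_krylovFamily (h : IsUnitaryOp (blockOp A B C D)) {x : X}
    (hx : x ∈ Submodule.span ℂ (Set.range (krylovFamily A B C))) :
    A x ∈ Submodule.span ℂ (Set.range (krylovFamily A B C)) := by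
  have hmem i : krylovFamily A B C i ∈ Submodule.span ℂ (Set.range (krylovFamily A B C)) :=
    Submodule.subset_span (Set.mem_range_self i)
  induction hx using Submodule.span_induction with
  | zero => simp
  | add x y _ _ hx hy => rw [map_add]; exact add_mem hx hy
  | smul c x _ hx => rw [map_smul]; exact Submodule.smul_mem _ c hx
  | mem x hx =>
    obtain ⟨⟨n, u⟩ | ⟨_ | n, v⟩, rfl⟩ := hx
    · convert hmem (.inl (n + 1, u)) using 1
      simp only [krylovFamily, Sum.elim_inl, pow_succ', mul_apply_eq_comp]
    · convert neg_mem (hmem (.inl (0, ContinuousLinearMap.adjoint D v))) using 1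
      exact h.map_adjoint_output v
    · convert sub_mem (hmem (.inr (n, v)))
        (hmem (.inl (0, ContinuousLinearMap.adjoint B (krylovFamily A B C (.inr (n, v)))))) using 1
      simp only [krylovFamily, Sum.elim_inr, pow_succ', mul_apply_eq_comp, h.map_adjoint_state]
      rfl

theorem CloselyConnected1.dense_span_krylovFamily (hcc : CloselyConnected1 A B C)
    (h : IsUnitaryOp (blockOp A B C D)) :
    Dense (Submodule.span ℂ (Set.range (krylovFamily A B C)) : Set X) := by
  refine (Submodule.dense_iff_topologicalClosure_eq_top.2 hcc).mono (Submodule.span_le.2 ?_)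
  rintro _ ⟨w, y, hy, rfl⟩
  induction w with
  | nil =>
    rcases hy with ⟨u, rfl⟩ | ⟨v, rfl⟩
    · exact Submodule.subset_span ⟨.inl (0, u), rfl⟩
    · exact Submodule.subset_span ⟨.inr (0, v), rfl⟩
  | cons b w ih =>
    rw [List.map_cons, List.prod_cons, mul_apply_eq_comp]
    cases b with
    | true => exact h.map_mem_span_krylovFamily ih
    | false =>
      rw [← range_krylovFamily_adjoint] at ih ⊢
      exact h.dual.map_mem_span_krylovFamily ih

theorem IsUnitaryOp.inner_pow_eq_of_markov_eq (h : IsUnitaryOp (blockOp A B C D))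
    (h' : IsUnitaryOp (blockOp A' B' C' D')) (hm : markov A B C D = markov A' B' C' D')
    (m n : ℕ) (u w : E) :
    ⟪(A ^ m) (B u), (A ^ n) (B w)⟫_ℂ = ⟪(A' ^ m) (B' u), (A' ^ n) (B' w)⟫_ℂ := by
  have hD (u : E) : D' u = D u := DFunLike.congr_fun (congrFun hm 0).symm u
  have hCAB (k : ℕ) (u : E) : C' ((A' ^ k) (B' u)) = C ((A ^ k) (B u)) :=
    DFunLike.congr_fun (congrFun hm (k + 1)).symm u
  induction m generalizing n with
  | zero =>
    cases n with
    | zero =>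
      have e := h.inner_block 0 0 u w
      have e' := h'.inner_block 0 0 u w
      simp only [map_zero, zero_add, inner_zero_left, hD] at e e'
      exact add_right_cancel (e.trans e'.symm)
    | succ n =>
      have e := h.inner_block 0 ((A ^ n) (B w)) u 0
      have e' := h'.inner_block 0 ((A' ^ n) (B' w)) u 0
      simp only [map_zero, zero_add, add_zero, inner_zero_left, inner_zero_right, hD, hCAB] at e e'
      simpa only [pow_zero, one_apply_eq_self, pow_succ', mul_apply_eq_comp] using
        add_right_cancel (e.trans e'.symm)
  | succ m ih =>
    cases n with
    | zero =>
      have e := h.inner_block ((A ^ m) (B u)) 0 0 w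
      have e' := h'.inner_block ((A' ^ m) (B' u)) 0 0 w
      simp only [map_zero, zero_add, add_zero, inner_zero_left, inner_zero_right, hD, hCAB] at e e'
      simpa only [pow_zero, one_apply_eq_self, pow_succ', mul_apply_eq_comp] using
        add_right_cancel (e.trans e'.symm)
    | succ n =>
      have e := h.inner_block ((A ^ m) (B u)) ((A ^ n) (B w)) 0 0
      have e' := h'.inner_block ((A' ^ m) (B' u)) ((A' ^ n) (B' w)) 0 0
      simp only [map_zero, add_zero, hCAB, ← ih] at e e'
      simpa only [pow_zero, one_apply_eq_self, pow_succ', mul_apply_eq_comp] using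
        add_right_cancel (e.trans e'.symm)

theorem IsUnitaryOp.inner_krylovFamily_eq (h : IsUnitaryOp (blockOp A B C D))
    (h' : IsUnitaryOp (blockOp A' B' C' D')) (hm : markov A B C D = markov A' B' C' D')
    (i j : (ℕ × E) ⊕ (ℕ × F)) :
    ⟪krylovFamily A B C i, krylovFamily A B C j⟫_ℂ =
      ⟪krylovFamily A' B' C' i, krylovFamily A' B' C' j⟫_ℂ := by
  have hm' : markov (ContinuousLinearMap.adjoint A) (ContinuousLinearMap.adjoint C)
        (ContinuousLinearMap.adjoint B) (ContinuousLinearMap.adjoint D) =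
      markov (ContinuousLinearMap.adjoint A') (ContinuousLinearMap.adjoint C')
        (ContinuousLinearMap.adjoint B') (ContinuousLinearMap.adjoint D') := by
    ext1 k
    rw [markov_adjoint, markov_adjoint, hm]
  have hmixed (m n : ℕ) (u : E) (v : F) :
      ⟪krylovFamily A B C (.inl (m, u)), krylovFamily A B C (.inr (n, v))⟫_ℂ =
        ⟪krylovFamily A' B' C' (.inl (m, u)), krylovFamily A' B' C' (.inr (n, v))⟫_ℂ := by
    simp only [krylovFamily, Sum.elim_inl, Sum.elim_inr, inner_pow_adjoint_pow A B C D,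
      inner_pow_adjoint_pow A' B' C' D', hm]
  rcases i with ⟨m, u⟩ | ⟨m, v⟩ <;> rcases j with ⟨n, w⟩ | ⟨n, w⟩
  · exact h.inner_pow_eq_of_markov_eq h' hm m n u w
  · exact hmixed m n u w
  · rw [← inner_conj_symm, hmixed, inner_conj_symm]
  · exact h.dual.inner_pow_eq_of_markov_eq h'.dual hm' m n v w

theorem exists_unitary_similarity_of_markov_eq
    (h : IsUnitaryOp (blockOp A B C D)) (hcc : CloselyConnected1 A B C)
    (h' : IsUnitaryOp (blockOp A' B' C' D')) (hcc' : CloselyConnected1 A' B' C')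
    (hm : markov A B C D = markov A' B' C' D') :
    ∃ U : X ≃ₗᵢ[ℂ] X', (∀ x, A' (U x) = U (A x)) ∧ (∀ u, B' u = U (B u)) ∧
      ∀ x, C' (U x) = C x := by
  have hdense := hcc.dense_span_krylovFamily h
  obtain ⟨U, hU⟩ := exists_linearIsometryEquiv_of_inner_eq (h.inner_krylovFamily_eq h' hm)
    hdense (hcc'.dense_span_krylovFamily h')
  have hD : D = D' := congrFun hm 0
  have hpow (n : ℕ) (u : E) : U ((A ^ n) (B u)) = (A' ^ n) (B' u) := hU (.inl (n, u))
  have hpow' (n : ℕ) (v : F) :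
      U ((adjoint A ^ n) (adjoint C v)) = (adjoint A' ^ n) (adjoint C' v) := hU (.inr (n, v))
  have hB (u : E) : U (B u) = B' u := hpow 0 u
  have hC' (v : F) : U (adjoint C v) = adjoint C' v := hpow' 0 v
  have hC (x : X) : C' (U x) = C x := by
    refine ext_inner_right ℂ fun v => ?_
    rw [← adjoint_inner_right, ← adjoint_inner_right, ← hC', U.inner_map_map]
  have hBA (n : ℕ) (v : F) : adjoint B' ((adjoint A' ^ n) (adjoint C' v)) =
      adjoint B ((adjoint A ^ n) (adjoint C v)) := by
    have := DFunLike.congr_fun (congrArg adjoint (congrFun hm (n + 1))) v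
    rw [← markov_adjoint, ← markov_adjoint] at this
    exact this.symm
  have hA : A' ∘L (U : X →L[ℂ] X') = (U : X →L[ℂ] X') ∘L A := by
    refine ext_on hdense ?_
    rintro _ ⟨⟨n, u⟩ | ⟨_ | n, v⟩, rfl⟩
    · change A' (U ((A ^ n) (B u))) = U (A ((A ^ n) (B u)))
      rw [hpow n u, ← mul_apply_eq_comp, ← mul_apply_eq_comp, ← pow_succ', ← pow_succ', hpow]
    · change A' (U (adjoint C v)) = U (A (adjoint C v))
      rw [hC', h.map_adjoint_output, h'.map_adjoint_output, map_neg, hB, hD]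
    · change A' (U ((adjoint A ^ (n + 1)) (adjoint C v))) =
        U (A ((adjoint A ^ (n + 1)) (adjoint C v)))
      rw [hpow', pow_succ', pow_succ', mul_apply_eq_comp, mul_apply_eq_comp, h.map_adjoint_state,
        h'.map_adjoint_state, map_sub, hpow', hB, hBA]
  exact ⟨U, DFunLike.congr_fun hA, fun u => (hB u).symm, hC⟩

end UniquenessOfRealization

section PowerSeries

open scoped NNReal Topology
open Filter

variable {E : Type*} [NormedAddCommGroup E] [NormedSpace ℂ E]

theorem eq_of_hasSum_pow_smul {a b : ℕ → E} {f : ℂ → E}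
    (ha : ∀ᶠ z in 𝓝 0, HasSum (fun n => z ^ n • a n) (f z))
    (hb : ∀ᶠ z in 𝓝 0, HasSum (fun n => z ^ n • b n) (f z)) : a = b := by
  have hseries {a : ℕ → E} (ha : ∀ᶠ z in 𝓝 0, HasSum (fun n => z ^ n • a n) (f z)) :
      ∃ p : FormalMultilinearSeries ℂ ℂ E, HasFPowerSeriesAt f p 0 ∧ p.coeff = a := by
    let p : FormalMultilinearSeries ℂ ℂ E := fun n =>
      ContinuousMultilinearMap.mkPiRing ℂ (Fin n) (a n)
    have hp : p.coeff = a := by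
      funext n
      simp [p, FormalMultilinearSeries.coeff]
    refine ⟨p, hasFPowerSeriesAt_iff.2 ?_, hp⟩
    simpa only [hp, zero_add] using ha
  obtain ⟨p, hp, rfl⟩ := hseries ha
  obtain ⟨q, hq, rfl⟩ := hseries hb
  rw [hp.eq_formalMultilinearSeries hq]

theorem eq_of_hasSum_pow_succ_smul {a b : ℕ → E} {f : ℂ → E}
    (ha : ∀ᶠ z in 𝓝 0, HasSum (fun n => z ^ (n + 1) • a n) (f z))
    (hb : ∀ᶠ z in 𝓝 0, HasSum (fun n => z ^ (n + 1) • b n) (f z)) : a = b := by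
  let shift (a : ℕ → E) (n : ℕ) : E := Nat.casesOn n 0 a
  have hshift {a : ℕ → E} (ha : ∀ᶠ z in 𝓝 0, HasSum (fun n => z ^ (n + 1) • a n) (f z)) :
      ∀ᶠ z in 𝓝 0, HasSum (fun n => z ^ n • shift a n) (f z) := by
    refine ha.mono fun z hz => (hasSum_nat_add_iff' 1).1 ?_
    simpa [shift] using hz
  have heq := eq_of_hasSum_pow_smul (hshift ha) (hshift hb)
  exact funext fun n => congrFun heq (n + 1)

theorem hasFPowerSeriesOnBall_cauchyPowerSeries [CompleteSpace E] {f : ℂ → E} {c : ℂ} {r R : ℝ≥0}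
    (hf : DifferentiableOn ℂ f (ball c R)) (hr : 0 < r) (hrR : r < R) :
    HasFPowerSeriesOnBall f (cauchyPowerSeries f c r) c R := by
  have hsmall {s : ℝ≥0} (hs : 0 < s) (hsR : s < R) :
      HasFPowerSeriesOnBall f (cauchyPowerSeries f c r) c s :=
    ((hf.mono (closedBall_subset_ball hrR)).hasFPowerSeriesOnBall hr).exchange_radius
      ((hf.mono (closedBall_subset_ball hsR)).hasFPowerSeriesOnBall hs)
  refine ⟨ENNReal.le_of_forall_nnreal_lt fun s hs => ?_, ?_, fun {y} hy => ?_⟩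
  · have hmax : max r s < R := max_lt hrR (by exact_mod_cast hs)
    exact le_trans (by exact_mod_cast le_max_right r s)
      (hsmall (lt_max_of_lt_left hr) hmax).r_le
  · exact_mod_cast hr.trans hrR
  · rw [mem_eball_zero_iff] at hy
    obtain ⟨s, hys, hsR⟩ := ENNReal.lt_iff_exists_nnreal_btwn.1 hy
    have hs : 0 < s := by exact_mod_cast (zero_le (a := ‖y‖ₑ)).trans_lt hys
    exact (hsmall hs (by exact_mod_cast hsR)).hasSum (mem_eball_zero_iff.2 hys)

end PowerSeries

section FourierCoefficients

open AddCircle MeasureTheory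

variable {T : ℝ}

theorem norm_fourier_apply (n : ℤ) (t : AddCircle T) : ‖fourier n t‖ = 1 := by
  rw [fourier_apply, Circle.norm_coe]

section TrigPoly

variable {E : Type*} [NormedAddCommGroup E] [NormedSpace ℂ E]

/-- The trigonometric polynomial with coefficients `f x`, `x ∈ s`. -/
def trigPoly (s : Finset ℤ) (f : ℤ → E) (t : AddCircle T) : E :=
  ∑ x ∈ s, fourier x t • f x

@[fun_prop]
theorem continuous_trigPoly (s : Finset ℤ) (f : ℤ → E) :
    Continuous (trigPoly s f : AddCircle T → E) := by
  unfold trigPoly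
  fun_prop

end TrigPoly

variable [Fact (0 < T)]

section Normed

variable {E : Type*} [NormedAddCommGroup E]

theorem integrable_haarAddCircle_of_continuous {φ : AddCircle T → E} (hφ : Continuous φ) :
    Integrable φ haarAddCircle :=
  hφ.integrable_of_hasCompactSupport (.of_compactSpace φ)

variable [NormedSpace ℂ E]

theorem fourierCoeff_fourier_smul [CompleteSpace E] (k n : ℤ) (c : E) :
    fourierCoeff (fun t : AddCircle T => fourier k t • c) n = (Pi.single k 1 : ℤ → ℂ) n • c := by
  simp only [← fourierCoeff_fourier (T := T), fourierCoeff, smul_smul, smul_eq_mul]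
  exact integral_smul_const _ c

theorem fourierCoeff_eq_extend [CompleteSpace E] {a : ℕ → E} {Φ : AddCircle T → E}
    (ha : Summable fun k => ‖a k‖) (hΦ : ∀ t, HasSum (fun k : ℕ => fourier k t • a k) (Φ t)) :
    fourierCoeff Φ = Function.extend Nat.cast a 0 := by
  funext n
  have hterms : HasSum (fun k : ℕ => fourierCoeff (fun t : AddCircle T => fourier k t • a k) n)
      (fourierCoeff Φ n) := by
    refine hasSum_integral_of_dominated_convergence (fun k _ => ‖a k‖) (fun k => ?_)
      (fun k => .of_forall fun t => ?_) (.of_forall fun _ => ha) (integrable_const _)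
      (.of_forall fun t => (hΦ t).const_smul _)
    · exact (by fun_prop : Continuous fun t : AddCircle T =>
        fourier (-n) t • fourier (k : ℤ) t • a k).aestronglyMeasurable
    · rw [norm_smul, norm_smul, norm_fourier_apply, norm_fourier_apply, one_mul, one_mul]
  simp only [fourierCoeff_fourier_smul] at hterms
  by_cases hn : ∃ k : ℕ, (k : ℤ) = n
  · obtain ⟨k, rfl⟩ := hn
    rw [Nat.cast_injective.extend_apply]
    have hk := hasSum_single (f := fun j : ℕ => (Pi.single (j : ℤ) 1 : ℤ → ℂ) k • a j) k
      fun j hj => by simp [Ne.symm hj]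
    simpa only [Pi.single_eq_same, one_smul] using hterms.unique hk
  · rw [Function.extend_apply' _ _ _ hn]
    have hzero (k : ℕ) : (Pi.single (k : ℤ) 1 : ℤ → ℂ) n • a k = 0 := by
      rw [Pi.single_eq_of_ne fun h => hn ⟨k, h.symm⟩, zero_smul]
    simp only [hzero] at hterms
    exact hterms.unique hasSum_zero

end Normed

variable {E F : Type*} [NormedAddCommGroup E] [InnerProductSpace ℂ E]
  [NormedAddCommGroup F] [InnerProductSpace ℂ F]

theorem integral_inner_trigPoly [CompleteSpace F] {Φ : AddCircle T → E →L[ℂ] F}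
    (hΦ : Continuous Φ) (s : Finset ℤ) (f : ℤ → E) (g : ℤ → F) :
    ∫ t, ⟪trigPoly s g t, Φ t (trigPoly s f t)⟫_ℂ ∂haarAddCircle =
      ∑ x ∈ s, ∑ y ∈ s, ⟪g y, fourierCoeff Φ (y - x) (f x)⟫_ℂ := by
  have hterm (x y : ℤ) : ⟪g y, fourierCoeff Φ (y - x) (f x)⟫_ℂ =
      ∫ t : AddCircle T, ⟪fourier y t • g y, Φ t (fourier x t • f x)⟫_ℂ ∂haarAddCircle := by
    let L : (E →L[ℂ] F) →L[ℂ] ℂ := innerSL ℂ (g y) ∘L ContinuousLinearMap.apply ℂ F (f x)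
    change L (∫ t, fourier (-(y - x)) t • Φ t ∂haarAddCircle) = _
    rw [← L.integral_comp_comm (integrable_haarAddCircle_of_continuous (by fun_prop))]
    congr 1 with t
    simp only [L, map_smul, coe_comp, Function.comp_apply, apply_apply, innerSL_apply_apply,
      inner_smul_left, inner_smul_right, neg_sub, sub_eq_add_neg x y, fourier_add, fourier_neg,
      smul_eq_mul]
    ring
  simp only [hterm, trigPoly, map_sum, sum_inner, inner_sum]
  rw [integral_finsetSum _ fun x _ => integrable_haarAddCircle_of_continuous (by fun_prop)]
  refine Finset.sum_congr rfl fun x _ => ?_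
  rw [integral_finsetSum _ fun y _ => integrable_haarAddCircle_of_continuous (by fun_prop)]

theorem integral_norm_sq_trigPoly [CompleteSpace E] (s : Finset ℤ) (f : ℤ → E) :
    ∫ t : AddCircle T, ‖trigPoly s f t‖ ^ 2 ∂haarAddCircle = ∑ x ∈ s, ‖f x‖ ^ 2 := by
  have hcoeff (n : ℤ) : fourierCoeff (fun _ : AddCircle T => ContinuousLinearMap.id ℂ E) n =
      (Pi.single 0 1 : ℤ → ℂ) n • ContinuousLinearMap.id ℂ E := by
    rw [← fourierCoeff_fourier_smul (T := T)]
    simp only [fourier_zero, one_smul]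
  have hdiag (x : ℤ) (hx : x ∈ s) : ∑ y ∈ s,
      ⟪f y, ((Pi.single 0 1 : ℤ → ℂ) (y - x) • ContinuousLinearMap.id ℂ E) (f x)⟫_ℂ =
        ((‖f x‖ ^ 2 : ℝ) : ℂ) := by
    rw [Finset.sum_eq_single_of_mem x hx fun y _ hyx => by
      rw [Pi.single_eq_of_ne (sub_ne_zero.2 hyx), zero_smul, zero_apply, inner_zero_right]]
    simp [inner_self_eq_norm_sq_to_K]
  have h := integral_inner_trigPoly (T := T) (Φ := fun _ => ContinuousLinearMap.id ℂ E)
    continuous_const s f f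
  simp only [hcoeff] at h
  rw [Finset.sum_congr rfl hdiag] at h
  simp only [id_apply, inner_self_eq_norm_sq_to_K] at h
  norm_cast at h
  exact Complex.ofReal_injective h

/-- A two-sided sequence `S` of operators is a contractive symbol if the Toeplitz operator
`f ↦ (∑ x, S (y - x) (f x))_y` is a contraction on finitely supported sequences. The estimate is
kept in the polarized form in which it is passed to limits and to kernels. -/
def IsContractiveSymbol (S : ℤ → E →L[ℂ] F) : Prop :=
  ∀ (s : Finset ℤ) (f : ℤ → E) (g : ℤ → F),
    2 * ‖∑ x ∈ s, ∑ y ∈ s, ⟪g y, S (y - x) (f x)⟫_ℂ‖ ≤ ∑ x ∈ s, ‖f x‖ ^ 2 + ∑ y ∈ s, ‖g y‖ ^ 2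

theorem IsContractiveSymbol.of_tendsto {ι : Type*} {l : Filter ι} [l.NeBot]
    {S : ι → ℤ → E →L[ℂ] F} {S₀ : ℤ → E →L[ℂ] F} (hS : ∀ᶠ i in l, IsContractiveSymbol (S i))
    (hlim : ∀ n, Filter.Tendsto (fun i => S i n) l (nhds (S₀ n))) : IsContractiveSymbol S₀ := by
  intro s f g
  refine le_of_tendsto ?_ (hS.mono fun i hi => hi s f g)
  refine ((tendsto_finsetSum _ fun x _ => tendsto_finsetSum _ fun y _ => ?_).norm).const_mul 2
  exact tendsto_const_nhds.inner
    (((ContinuousLinearMap.apply ℂ F (f x)).continuous.tendsto _).comp (hlim (y - x)))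

variable [CompleteSpace E] [CompleteSpace F]

theorem isContractiveSymbol_fourierCoeff {Φ : AddCircle T → E →L[ℂ] F} (hΦ : Continuous Φ)
    (hnorm : ∀ t, ‖Φ t‖ ≤ 1) : IsContractiveSymbol (fourierCoeff Φ) := by
  intro s f g
  have hpointwise (t : AddCircle T) : ‖⟪trigPoly s g t, Φ t (trigPoly s f t)⟫_ℂ‖ ≤
      (‖trigPoly s f t‖ ^ 2 + ‖trigPoly s g t‖ ^ 2) / 2 := by
    have hle : ‖Φ t (trigPoly s f t)‖ ≤ ‖trigPoly s f t‖ := by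
      simpa only [one_mul] using (Φ t).le_of_opNorm_le (hnorm t) (trigPoly s f t)
    have := mul_le_mul_of_nonneg_left hle (norm_nonneg (trigPoly s g t))
    nlinarith [norm_inner_le_norm (𝕜 := ℂ) (trigPoly s g t) (Φ t (trigPoly s f t)),
      sq_nonneg (‖trigPoly s f t‖ - ‖trigPoly s g t‖)]
  have hint {φ : AddCircle T → ℝ} (hφ : Continuous φ) : Integrable φ haarAddCircle :=
    integrable_haarAddCircle_of_continuous hφ
  calc 2 * ‖∑ x ∈ s, ∑ y ∈ s, ⟪g y, fourierCoeff Φ (y - x) (f x)⟫_ℂ‖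
      ≤ 2 * ∫ t, (‖trigPoly s f t‖ ^ 2 + ‖trigPoly s g t‖ ^ 2) / 2 ∂haarAddCircle := by
        rw [← integral_inner_trigPoly hΦ]
        gcongr
        exact norm_integral_le_of_norm_le (hint (by fun_prop)) (.of_forall hpointwise)
    _ = ∑ x ∈ s, ‖f x‖ ^ 2 + ∑ y ∈ s, ‖g y‖ ^ 2 := by
        rw [integral_div, mul_div_cancel₀ _ two_ne_zero,
          integral_add (hint (by fun_prop)) (hint (by fun_prop)),
          integral_norm_sq_trigPoly, integral_norm_sq_trigPoly]

end FourierCoefficients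

section TaylorSymbol

open scoped NNReal Topology
open Filter

variable {E F : Type*} [NormedAddCommGroup E] [InnerProductSpace ℂ E] [CompleteSpace E]
  [NormedAddCommGroup F] [InnerProductSpace ℂ F] [CompleteSpace F]

theorem isContractiveSymbol_coeff {f : ℂ → E →L[ℂ] F} {p : FormalMultilinearSeries ℂ ℂ (E →L[ℂ] F)}
    (hp : HasFPowerSeriesOnBall f p 0 1) (hf : ∀ z ∈ ball (0 : ℂ) 1, ‖f z‖ ≤ 1) :
    IsContractiveSymbol (Function.extend Nat.cast p.coeff 0 : ℤ → E →L[ℂ] F) := by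
  -- `f` need not extend continuously to the unit circle, so smaller circles are used.
  have hcircle {r : ℝ} (hr : 0 ≤ r) (hr1 : r < 1) :
      IsContractiveSymbol (Function.extend Nat.cast (fun k => (r : ℂ) ^ k • p.coeff k) 0) := by
    lift r to ℝ≥0 using hr
    have hmem (t : UnitAddCircle) : (r : ℂ) * fourier 1 t ∈ ball (0 : ℂ) 1 := by
      rw [mem_ball_zero_iff, norm_mul, norm_fourier_apply, mul_one]
      simpa using hr1
    have hmem_eball (t : UnitAddCircle) : (r : ℂ) * fourier 1 t ∈ eball (0 : ℂ) 1 := by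
      simpa [← ENNReal.ofReal_one, eball_ofReal] using hmem t
    have hsummable : Summable fun k => ‖(r : ℂ) ^ k • p.coeff k‖ := by
      have := p.summable_norm_mul_pow (r := r) (lt_of_lt_of_le (by exact_mod_cast hr1) hp.r_le)
      simpa [norm_smul, mul_comm] using this
    have hsum (t : UnitAddCircle) : HasSum (fun k : ℕ => fourier k t • (r : ℂ) ^ k • p.coeff k)
        (f (r * fourier 1 t)) := by
      have := hp.hasSum_sub (y := r * fourier 1 t) (hmem_eball t)
      simp only [sub_zero, FormalMultilinearSeries.apply_eq_pow_smul_coeff, mul_pow] at this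
      refine this.congr_fun fun k => ?_
      rw [smul_smul, mul_comm, fourier_apply, fourier_one, natCast_zsmul, AddCircle.toCircle_nsmul,
        Circle.coe_pow]
    rw [← fourierCoeff_eq_extend hsummable hsum]
    refine isContractiveSymbol_fourierCoeff ?_ fun t => hf _ (hmem t)
    exact hp.continuousOn.comp_continuous (by fun_prop) fun t => hmem_eball t
  refine IsContractiveSymbol.of_tendsto (l := 𝓝[<] (1 : ℝ))
    (S := fun r => Function.extend Nat.cast (fun k => (r : ℂ) ^ k • p.coeff k) 0) ?_ fun n => ?_
  · filter_upwards [Ioo_mem_nhdsLT one_pos] with r hr using hcircle hr.1.le hr.2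
  · by_cases hn : ∃ k : ℕ, (k : ℤ) = n
    · obtain ⟨k, rfl⟩ := hn
      simp only [Nat.cast_injective.extend_apply]
      have : Continuous fun r : ℝ => (r : ℂ) ^ k • p.coeff k := by fun_prop
      simpa using (this.tendsto 1).mono_left nhdsWithin_le_nhds
    · simpa only [Function.extend_apply' _ _ _ hn] using tendsto_const_nhds

end TaylorSymbol

section ToeplitzKernel

theorem exists_unitary_map_kerFun {H ι V : Type*} [NormedAddCommGroup H] [InnerProductSpace ℂ H]
    [CompleteSpace H] [NormedAddCommGroup V] [InnerProductSpace ℂ V] [CompleteSpace V]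
    [RKHS ℂ H ι V] (σ : ι ≃ ι)
    (hσ : ∀ x y, RKHS.kernel H (σ x) (σ y) = RKHS.kernel H x y) :
    ∃ U : H ≃ₗᵢ[ℂ] H, ∀ x v, U (RKHS.kerFun H x v) = RKHS.kerFun H (σ x) v := by
  let φ : ι × V → H := fun p => RKHS.kerFun H p.1 p.2
  have hdense : Dense (Submodule.span ℂ (Set.range φ) : Set H) := by
    rw [Submodule.dense_iff_topologicalClosure_eq_top, ← RKHS.kerFun_dense H]
    congr! 3
    simp [φ, Set.ext_iff]
  have hrange : Set.range (fun p : ι × V => φ (σ p.1, p.2)) = Set.range φ :=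
    (σ.prodCongr (.refl V)).surjective.range_comp φ
  obtain ⟨U, hU⟩ := exists_linearIsometryEquiv_of_inner_eq
    (φ := φ) (ψ := fun p => φ (σ p.1, p.2))
    (fun p q => by simp only [φ, ← RKHS.kernel_inner, hσ]) hdense (hrange ▸ hdense)
  exact ⟨U, fun x v => hU (x, v)⟩

variable {E F : Type*} [NormedAddCommGroup E] [InnerProductSpace ℂ E] [CompleteSpace E]
  [NormedAddCommGroup F] [InnerProductSpace ℂ F] [CompleteSpace F]

/-- The Toeplitz kernel on `F ⊕ E` whose diagonal blocks are Kronecker deltas and whose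
off-diagonal blocks are `S (m - n)` and its adjoint: the prospective Gram matrix of two orthonormal
two-sided sequences of copies of `F` and `E` with cross-correlation `S`. -/
def toeplitzKernel (S : ℤ → E →L[ℂ] F) :
    Matrix ℤ ℤ (WithLp 2 (F × E) →L[ℂ] WithLp 2 (F × E)) :=
  .of fun m n => blockOp (if m = n then 1 else 0) (S (m - n)) (adjoint (S (n - m)))
    (if m = n then 1 else 0)

theorem inner_toeplitzKernel (S : ℤ → E →L[ℂ] F) (m n : ℤ) (v w : WithLp 2 (F × E)) :
    ⟪toeplitzKernel S m n v, w⟫_ℂ =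
      (if m = n then ⟪v, w⟫_ℂ else 0) + ⟪S (m - n) v.snd, w.fst⟫_ℂ +
        ⟪v.fst, S (n - m) w.snd⟫_ℂ := by
  obtain ⟨⟨g, f⟩⟩ := v
  obtain ⟨⟨g', f'⟩⟩ := w
  rw [toeplitzKernel, Matrix.of_apply, blockOp_toLp]
  split_ifs <;>
  · simp only [WithLp.prod_inner_apply, inner_add_left, adjoint_inner_left, one_apply_eq_self,
      zero_apply, inner_zero_left, WithLp.toLp_fst, WithLp.toLp_snd]
    ring

theorem isHermitian_toeplitzKernel (S : ℤ → E →L[ℂ] F) : (toeplitzKernel S).IsHermitian := by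
  ext1 m n
  refine ContinuousLinearMap.ext fun v => ext_inner_right ℂ fun w => ?_
  rw [Matrix.conjTranspose_apply, star_eq_adjoint, adjoint_inner_left, ← inner_conj_symm,
    inner_toeplitzKernel, inner_toeplitzKernel]
  simp only [map_add, inner_conj_symm, apply_ite (starRingEnd ℂ), map_zero, eq_comm]
  ring

theorem IsContractiveSymbol.posSemidef_toeplitzKernel {S : ℤ → E →L[ℂ] F}
    (hS : IsContractiveSymbol S) : (toeplitzKernel S).PosSemidef := by
  have hiff := (RKHS.posSemidef_tfae (K := toeplitzKernel S)).out 0 2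
  refine hiff.2 ⟨isHermitian_toeplitzKernel S, fun w => ?_⟩
  let f (x : ℤ) : E := (w x).snd
  let g (x : ℤ) : F := (w x).fst
  let z := ∑ x ∈ w.support, ∑ y ∈ w.support, ⟪g y, S (y - x) (f x)⟫_ℂ
  have hdiag (x : ℤ) (hx : x ∈ w.support) :
      (∑ y ∈ w.support, if y = x then ⟪w x, w y⟫_ℂ else 0) =
        ((‖f x‖ ^ 2 + ‖g x‖ ^ 2 : ℝ) : ℂ) := by
    rw [Finset.sum_ite_eq', if_pos hx, WithLp.prod_inner_apply, inner_self_eq_norm_sq_to_K,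
      inner_self_eq_norm_sq_to_K, add_comm]
    norm_cast
  have hsum : (w.sum fun x v => w.sum fun y v' => ⟪toeplitzKernel S y x v, v'⟫_ℂ) =
      ((∑ x ∈ w.support, ‖f x‖ ^ 2 + ∑ y ∈ w.support, ‖g y‖ ^ 2 : ℝ) : ℂ) +
        starRingEnd ℂ z + z := by
    simp only [Finsupp.sum, inner_toeplitzKernel, Finset.sum_add_distrib]
    rw [Finset.sum_congr rfl hdiag]
    congr 1
    · simp only [z, f, g, map_sum, inner_conj_symm, Finset.sum_add_distrib, Complex.ofReal_add,
        Complex.ofReal_sum]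
    · exact Finset.sum_comm
  have hz : 2 * ‖z‖ ≤ ∑ x ∈ w.support, ‖f x‖ ^ 2 + ∑ y ∈ w.support, ‖g y‖ ^ 2 := hS w.support f g
  rw [hsum]
  simp only [RCLike.re_to_complex, Complex.add_re, Complex.conj_re, Complex.ofReal_re]
  linarith [neg_le_of_abs_le z.abs_re_le_norm]

end ToeplitzKernel

/-- A Lax–Phillips scattering system on `H` with symbol `S` and state space `X`: a unitary `shift`
together with sequences of isometric copies of `E` (incoming channels `inc n`) and of `F` (outgoing
channels `out n`) which it moves one step down, whose cross-correlation is `S` and whose ranges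
together are total in `H`. The state space is what remains after removing the inputs still to come,
`inc n` with `0 ≤ n`, and the outputs already emitted, `out n` with `n < 0`; it is a parameter so
that the time-reversed system has literally the same state space. -/
structure ScatteringSystem {E F : Type*}
    [NormedAddCommGroup E] [InnerProductSpace ℂ E] [CompleteSpace E]
    [NormedAddCommGroup F] [InnerProductSpace ℂ F] [CompleteSpace F]
    {H : Type*} [NormedAddCommGroup H] [InnerProductSpace ℂ H] [CompleteSpace H]
    (S : ℤ → E →L[ℂ] F) (X : Submodule ℂ H) where
  shift : H ≃ₗᵢ[ℂ] H
  inc : ℤ → E →L[ℂ] H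
  out : ℤ → F →L[ℂ] H
  shift_inc (n : ℤ) (u : E) : shift (inc n u) = inc (n - 1) u
  shift_out (n : ℤ) (v : F) : shift (out n v) = out (n - 1) v
  adjoint_inc_inc (m n : ℤ) (u : E) : adjoint (inc m) (inc n u) = if m = n then u else 0
  adjoint_out_out (m n : ℤ) (v : F) : adjoint (out m) (out n v) = if m = n then v else 0
  adjoint_out_inc (m n : ℤ) (u : E) : adjoint (out m) (inc n u) = S (m - n) u
  causal (n : ℤ) (hn : n < 0) : S n = 0
  total (h : H) (hinc : ∀ n, adjoint (inc n) h = 0) (hout : ∀ n, adjoint (out n) h = 0) : h = 0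
  mem_state (x : H) :
    x ∈ X ↔ (∀ n, 0 ≤ n → adjoint (inc n) x = 0) ∧ ∀ n < 0, adjoint (out n) x = 0

namespace ScatteringSystem

variable {E F H : Type*}
  [NormedAddCommGroup E] [InnerProductSpace ℂ E] [CompleteSpace E]
  [NormedAddCommGroup F] [InnerProductSpace ℂ F] [CompleteSpace F]
  [NormedAddCommGroup H] [InnerProductSpace ℂ H] [CompleteSpace H]
  {S : ℤ → E →L[ℂ] F} {X : Submodule ℂ H}

theorem isClosed_state (σ : ScatteringSystem S X) : IsClosed (X : Set H) := by
  have hclosed : (X : Set H) =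
      (⋂ n : ℤ, ⋂ _ : 0 ≤ n, {x | adjoint (σ.inc n) x = 0}) ∩
        ⋂ n : ℤ, ⋂ _ : n < 0, {x | adjoint (σ.out n) x = 0} := by
    ext x
    simp only [SetLike.mem_coe, σ.mem_state, Set.mem_inter_iff, Set.mem_iInter, Set.mem_ofPred_eq]
  rw [hclosed]
  exact (isClosed_biInter fun n _ => isClosed_eq (by fun_prop) continuous_const).inter
    (isClosed_biInter fun n _ => isClosed_eq (by fun_prop) continuous_const)

variable (σ : ScatteringSystem S X)

theorem adjoint_inc_out (m n : ℤ) (v : F) :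
    adjoint (σ.inc m) (σ.out n v) = adjoint (S (n - m)) v := by
  refine ext_inner_right ℂ fun u => ?_
  rw [adjoint_inner_left, adjoint_inner_left, ← σ.adjoint_out_inc, adjoint_inner_right]

theorem shift_symm_inc (n : ℤ) (u : E) : σ.shift.symm (σ.inc n u) = σ.inc (n + 1) u := by
  rw [LinearIsometryEquiv.symm_apply_eq, σ.shift_inc, add_sub_cancel_right]

theorem shift_symm_out (n : ℤ) (v : F) : σ.shift.symm (σ.out n v) = σ.out (n + 1) v := by
  rw [LinearIsometryEquiv.symm_apply_eq, σ.shift_out, add_sub_cancel_right]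

theorem inner_shift (h k : H) : ⟪h, σ.shift k⟫_ℂ = ⟪σ.shift.symm h, k⟫_ℂ := by
  rw [← σ.shift.inner_map_map (σ.shift.symm h), σ.shift.apply_symm_apply]

theorem adjoint_inc_shift (n : ℤ) (h : H) :
    adjoint (σ.inc n) (σ.shift h) = adjoint (σ.inc (n + 1)) h := by
  refine ext_inner_left ℂ fun u => ?_
  rw [adjoint_inner_right, adjoint_inner_right, inner_shift, shift_symm_inc]

theorem adjoint_out_shift (n : ℤ) (h : H) :
    adjoint (σ.out n) (σ.shift h) = adjoint (σ.out (n + 1)) h := by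
  refine ext_inner_left ℂ fun v => ?_
  rw [adjoint_inner_right, adjoint_inner_right, inner_shift, shift_symm_out]

/-- The time-reversed scattering system, in which incoming and outgoing channels trade places. Its
state-space operators are the adjoints of the original ones. -/
@[simps]
def dual : ScatteringSystem (fun n => adjoint (S n)) X where
  shift := σ.shift.symm
  inc n := σ.out (-1 - n)
  out n := σ.inc (-1 - n)
  shift_inc n v := by
    rw [shift_symm_out]
    ring_nf
  shift_out n u := by
    rw [shift_symm_inc]
    ring_nf
  adjoint_inc_inc m n v := by simp only [adjoint_out_out, sub_right_inj]
  adjoint_out_out m n u := by simp only [adjoint_inc_inc, sub_right_inj]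
  adjoint_out_inc m n v := by
    rw [adjoint_inc_out, sub_sub_sub_cancel_left]
  causal n hn := by rw [σ.causal n hn, map_zero]
  total h hinc hout := σ.total h (fun n => by simpa using hout (-1 - n))
    fun n => by simpa using hinc (-1 - n)
  mem_state x := by
    rw [σ.mem_state, and_comm]
    refine and_congr ⟨fun h n hn => h _ (by lia), fun h n hn => ?_⟩
      ⟨fun h n hn => h _ (by lia), fun h n hn => ?_⟩
    · simpa using h (-1 - n) (by lia)
    · simpa using h (-1 - n) (by lia)

section State

theorem adjoint_inc_state (x : X) {n : ℤ} (hn : 0 ≤ n) : adjoint (σ.inc n) x = 0 :=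
  ((σ.mem_state x).1 x.2).1 n hn

theorem adjoint_out_state (x : X) {n : ℤ} (hn : n < 0) : adjoint (σ.out n) x = 0 :=
  ((σ.mem_state x).1 x.2).2 n hn

theorem norm_state_add_inc_sq (x : X) (u : E) :
    ‖(x : H) + σ.inc 0 u‖ ^ 2 = ‖x‖ ^ 2 + ‖u‖ ^ 2 := by
  have hnorm : ‖σ.inc 0 u‖ = ‖u‖ := by
    refine (norm_map_iff_adjoint_comp_self (σ.inc 0)).2 ?_ u
    ext u
    simp [σ.adjoint_inc_inc]
  have horth : ⟪(x : H), σ.inc 0 u⟫_ℂ = 0 := by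
    rw [← adjoint_inner_left, σ.adjoint_inc_state x le_rfl, inner_zero_left]
  rw [norm_add_sq (𝕜 := ℂ), horth, map_zero, mul_zero, add_zero, hnorm, Submodule.coe_norm]

variable [CompleteSpace X]

theorem orthogonalProjectionOnto_inc {n : ℤ} (hn : 0 ≤ n) (u : E) :
    X.orthogonalProjectionOnto (σ.inc n u) = 0 := by
  refine ext_inner_left ℂ fun x => ?_
  rw [Submodule.inner_orthogonalProjectionOnto_eq_of_mem_left, ← adjoint_inner_left,
    σ.adjoint_inc_state x hn, inner_zero_left, inner_zero_right]

theorem orthogonalProjectionOnto_add_inc {h : H} (hinc : ∀ n, 1 ≤ n → adjoint (σ.inc n) h = 0)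
    (hout : ∀ n < 0, adjoint (σ.out n) h = 0) :
    X.orthogonalProjectionOnto h + σ.inc 0 (adjoint (σ.inc 0) h) = h := by
  have hmem : h - σ.inc 0 (adjoint (σ.inc 0) h) ∈ X := by
    refine (σ.mem_state _).2 ⟨fun n hn => ?_, fun n hn => ?_⟩
    · rw [map_sub, σ.adjoint_inc_inc]
      split_ifs with h0
      · rw [h0, sub_self]
      · rw [hinc n (by lia), sub_zero]
    · rw [map_sub, hout n hn, σ.adjoint_out_inc, σ.causal _ (by lia), zero_apply, sub_zero]
  have hproj := congrArg Subtype.val (X.orthogonalProjectionOnto_mem_subspace_eq_self ⟨_, hmem⟩)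
  rw [map_sub, σ.orthogonalProjectionOnto_inc le_rfl, sub_zero] at hproj
  rw [hproj, sub_add_cancel]

end State

section Colligation

variable [CompleteSpace X]

/-- The main operator of the system realizing `S`: the compression of the shift to the state
space. -/
def mainOp : X →L[ℂ] X :=
  X.orthogonalProjectionOnto ∘L (σ.shift : H →L[ℂ] H) ∘L X.subtypeL

/-- The input operator of the system realizing `S`: the component in the state space of the channel
that the shift brings in. -/
def inputOp : E →L[ℂ] X :=
  X.orthogonalProjectionOnto ∘L σ.inc (-1)

/-- The output operator of the system realizing `S`: the component of a state in the channel that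
the shift carries out of the state space. -/
def outputOp : X →L[ℂ] F :=
  adjoint (σ.out 0) ∘L X.subtypeL

theorem adjoint_mainOp : adjoint σ.mainOp = σ.dual.mainOp := by
  symm
  refine (eq_adjoint_iff _ _).2 fun x y => ?_
  change ⟪X.orthogonalProjectionOnto (σ.shift.symm x), y⟫_ℂ =
    ⟪x, X.orthogonalProjectionOnto (σ.shift y)⟫_ℂ
  rw [Submodule.inner_orthogonalProjectionOnto_eq_of_mem_right,
    Submodule.inner_orthogonalProjectionOnto_eq_of_mem_left, inner_shift]

theorem adjoint_inputOp : adjoint σ.inputOp = σ.dual.outputOp := by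
  symm
  refine (eq_adjoint_iff _ _).2 fun x u => ?_
  change ⟪adjoint (σ.inc (-1)) x, u⟫_ℂ = ⟪x, X.orthogonalProjectionOnto (σ.inc (-1) u)⟫_ℂ
  rw [Submodule.inner_orthogonalProjectionOnto_eq_of_mem_left, adjoint_inner_left]

theorem adjoint_outputOp : adjoint σ.outputOp = σ.dual.inputOp := by
  have h := congrArg adjoint σ.dual.adjoint_inputOp
  rw [adjoint_adjoint] at h
  exact h.symm

theorem shift_state_add_inc (x : X) (u : E) :
    σ.shift (x + σ.inc 0 u) =
      (σ.mainOp x + σ.inputOp u : X) + σ.out (-1) (σ.outputOp x + S 0 u) := by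
  have hinc (n : ℤ) (hn : 0 ≤ n) : adjoint (σ.inc n) (σ.shift (x + σ.inc 0 u)) = 0 := by
    rw [adjoint_inc_shift, map_add, σ.adjoint_inc_state x (by lia), σ.adjoint_inc_inc,
      if_neg (by lia), add_zero]
  have hout (n : ℤ) (hn : n < -1) : adjoint (σ.out n) (σ.shift (x + σ.inc 0 u)) = 0 := by
    rw [adjoint_out_shift, map_add, σ.adjoint_out_state x (by lia), σ.adjoint_out_inc,
      σ.causal _ (by lia), zero_apply, add_zero]
  have hstate : X.orthogonalProjectionOnto (σ.shift (x + σ.inc 0 u)) =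
      σ.mainOp x + σ.inputOp u := by
    rw [map_add, map_add, σ.shift_inc]
    rfl
  have houtput : adjoint (σ.out (-1)) (σ.shift (x + σ.inc 0 u)) = σ.outputOp x + S 0 u := by
    rw [adjoint_out_shift, map_add, σ.adjoint_out_inc]
    rfl
  rw [← hstate, ← houtput]
  exact (σ.dual.orthogonalProjectionOnto_add_inc (fun n hn => hout _ (by lia))
    fun n hn => hinc _ (by lia)).symm

theorem norm_mainOp_add_inputOp_sq (x : X) (u : E) :
    ‖σ.mainOp x + σ.inputOp u‖ ^ 2 + ‖σ.outputOp x + S 0 u‖ ^ 2 = ‖x‖ ^ 2 + ‖u‖ ^ 2 :=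
  calc ‖σ.mainOp x + σ.inputOp u‖ ^ 2 + ‖σ.outputOp x + S 0 u‖ ^ 2
      = ‖σ.shift (x + σ.inc 0 u)‖ ^ 2 := by
        rw [σ.shift_state_add_inc]
        exact (σ.dual.norm_state_add_inc_sq _ _).symm
    _ = ‖x‖ ^ 2 + ‖u‖ ^ 2 := by rw [σ.shift.norm_map, σ.norm_state_add_inc_sq]

theorem isUnitaryOp_blockOp :
    IsUnitaryOp (blockOp σ.mainOp σ.inputOp σ.outputOp (S 0)) := by
  refine _root_.isUnitaryOp_blockOp σ.norm_mainOp_add_inputOp_sq ?_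
  rw [adjoint_mainOp, adjoint_inputOp, adjoint_outputOp]
  exact σ.dual.norm_mainOp_add_inputOp_sq

theorem mainOp_orthogonalProjectionOnto {h : H} (hh : adjoint (σ.inc 0) h = 0) :
    σ.mainOp (X.orthogonalProjectionOnto h) = X.orthogonalProjectionOnto (σ.shift h) := by
  refine ext_inner_left ℂ fun y => ?_
  -- The inverse shift maps `X` into `X ⊕ inc 0 E`, and `h` is orthogonal to the second summand.
  have hy := σ.dual.shift_state_add_inc y 0
  simp only [map_zero, add_zero] at hy
  change σ.shift.symm y = (σ.dual.mainOp y : H) + σ.inc 0 (σ.dual.outputOp y) at hy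
  rw [← adjoint_inner_left, adjoint_mainOp,
    Submodule.inner_orthogonalProjectionOnto_eq_of_mem_left,
    Submodule.inner_orthogonalProjectionOnto_eq_of_mem_left, inner_shift, hy,
    inner_add_left, ← adjoint_inner_right (σ.inc 0), hh, inner_zero_right, add_zero]

theorem outputOp_orthogonalProjectionOnto {h : H} (hh : adjoint (σ.inc 0) h = 0) :
    σ.outputOp (X.orthogonalProjectionOnto h) = adjoint (σ.out 0) h := by
  refine ext_inner_left ℂ fun v => ?_
  have hv := σ.dual.shift_state_add_inc 0 v
  simp only [map_zero, zero_add, ZeroMemClass.coe_zero, dual_shift] at hv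
  change σ.shift.symm (σ.out (-1) v) =
    (σ.dual.inputOp v : H) + σ.inc 0 (adjoint (S 0) v) at hv
  rw [shift_symm_out, neg_add_cancel] at hv
  rw [← adjoint_inner_left, adjoint_outputOp, adjoint_inner_right (σ.out 0), hv, inner_add_left,
    ← adjoint_inner_right (σ.inc 0), hh, inner_zero_right, add_zero]
  exact Submodule.inner_orthogonalProjectionOnto_eq_of_mem_left _ _

theorem mainOp_pow_inputOp (k : ℕ) (u : E) :
    (σ.mainOp ^ k) (σ.inputOp u) = X.orthogonalProjectionOnto (σ.inc (-1 - k) u) := by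
  induction k with
  | zero =>
    rw [Nat.cast_zero, sub_zero]
    rfl
  | succ k ih =>
    rw [pow_succ', mul_apply_eq_comp, ih, mainOp_orthogonalProjectionOnto, σ.shift_inc,
      Nat.cast_succ, sub_sub]
    rw [σ.adjoint_inc_inc, if_neg (by lia)]

theorem markov_eq :
    markov σ.mainOp σ.inputOp σ.outputOp (S 0) = fun k : ℕ => S k := by
  funext k
  cases k with
  | zero => rfl
  | succ k =>
    ext u
    change σ.outputOp ((σ.mainOp ^ k) (σ.inputOp u)) = _
    rw [mainOp_pow_inputOp, outputOp_orthogonalProjectionOnto, σ.adjoint_out_inc]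
    · congr 2
      push_cast
      ring
    · rw [σ.adjoint_inc_inc, if_neg (by lia)]

theorem closelyConnected1 : CloselyConnected1 σ.mainOp σ.inputOp σ.outputOp := by
  rw [CloselyConnected1, Submodule.topologicalClosure_eq_top_iff, Submodule.eq_bot_iff]
  intro y hy
  have hinc (k : ℕ) : adjoint (σ.inc (-1 - k)) y = 0 := by
    refine ext_inner_left ℂ fun u => ?_
    have := hy _ (Submodule.subset_span ⟨List.replicate k true, _, .inl ⟨u, rfl⟩, rfl⟩)
    rw [List.map_replicate, List.prod_replicate, cond_true, mainOp_pow_inputOp,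
      Submodule.inner_orthogonalProjectionOnto_eq_of_mem_right] at this
    rw [adjoint_inner_right, this, inner_zero_right]
  have hout (k : ℕ) : adjoint (σ.out k) y = 0 := by
    refine ext_inner_left ℂ fun v => ?_
    have := hy _ (Submodule.subset_span ⟨List.replicate k false, _, .inr ⟨v, rfl⟩, rfl⟩)
    rw [List.map_replicate, List.prod_replicate, cond_false, adjoint_mainOp, adjoint_outputOp,
      σ.dual.mainOp_pow_inputOp, dual_inc, sub_sub_cancel,
      Submodule.inner_orthogonalProjectionOnto_eq_of_mem_right] at this
    rw [adjoint_inner_right, this, inner_zero_right]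
  refine Subtype.ext (σ.total y (fun n => ?_) fun n => ?_)
  · obtain hn | hn := le_or_gt 0 n
    · exact σ.adjoint_inc_state y hn
    · obtain ⟨k, rfl⟩ : ∃ k : ℕ, n = -1 - k := ⟨(-1 - n).toNat, by lia⟩
      exact hinc k
  · obtain hn | hn := lt_or_ge n 0
    · exact σ.adjoint_out_state y hn
    · lift n to ℕ using hn
      exact hout n

end Colligation

end ScatteringSystem

section Existence

universe u v

variable {E : Type u} {F : Type v}
  [NormedAddCommGroup E] [InnerProductSpace ℂ E] [CompleteSpace E]
  [NormedAddCommGroup F] [InnerProductSpace ℂ F] [CompleteSpace F] {S : ℤ → E →L[ℂ] F}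

theorem IsContractiveSymbol.exists_stationary_sequence (hS : IsContractiveSymbol S) :
    ∃ (H : Type (max u v)) (_ : NormedAddCommGroup H) (_ : InnerProductSpace ℂ H)
      (_ : CompleteSpace H) (U : H ≃ₗᵢ[ℂ] H) (φ : ℤ → WithLp 2 (F × E) →L[ℂ] H),
      (∀ n v, U (φ n v) = φ (n - 1) v) ∧
      (∀ m n v w, ⟪φ n v, φ m w⟫_ℂ = ⟪toeplitzKernel S m n v, w⟫_ℂ) ∧
      ∀ h, (∀ n v, ⟪φ n v, h⟫_ℂ = 0) → h = 0 := by
  have : Fact (toeplitzKernel S).PosSemidef := ⟨hS.posSemidef_toeplitzKernel⟩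
  let H := RKHS.OfKernel (toeplitzKernel S)
  have hkernel : RKHS.kernel H = toeplitzKernel S := RKHS.OfKernel.kernel_ofKernel
  obtain ⟨U, hU⟩ := exists_unitary_map_kerFun (H := H) (Equiv.subRight 1) fun m n => by
    rw [hkernel]
    simp only [toeplitzKernel, Matrix.of_apply, Equiv.subRight_apply, sub_left_inj,
      sub_sub_sub_cancel_right]
  refine ⟨H, inferInstance, inferInstance, inferInstance, U, RKHS.kerFun H, hU,
    fun m n v w => ?_, fun h hh => RKHS.ext fun n => ext_inner_left ℂ fun v => ?_⟩
  · rw [← RKHS.kernel_inner, hkernel]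
  · rw [← RKHS.kerFun_inner, hh, RKHS.coe_zero, Pi.zero_apply, inner_zero_right]

theorem exists_scatteringSystem (hS : IsContractiveSymbol S) (hcausal : ∀ n < 0, S n = 0) :
    ∃ (H : Type (max u v)) (_ : NormedAddCommGroup H) (_ : InnerProductSpace ℂ H)
      (_ : CompleteSpace H) (X : Submodule ℂ H), Nonempty (ScatteringSystem S X) := by
  obtain ⟨H, _, _, _, U, φ, hU, hφ, htotal⟩ := hS.exists_stationary_sequence
  let e : F × E →L[ℂ] WithLp 2 (F × E) := (WithLp.prodContinuousLinearEquiv 2 ℂ F E).symm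
  let inc (n : ℤ) : E →L[ℂ] H := φ n ∘L e ∘L .inr ℂ F E
  let out (n : ℤ) : F →L[ℂ] H := φ n ∘L e ∘L .inl ℂ F E
  have hinc (n : ℤ) (u : E) : inc n u = φ n (WithLp.toLp 2 (0, u)) := rfl
  have hout (n : ℤ) (v : F) : out n v = φ n (WithLp.toLp 2 (v, 0)) := rfl
  let X : Submodule ℂ H :=
    (⨅ n : ℤ, ⨅ _ : 0 ≤ n, (adjoint (inc n)).ker) ⊓ ⨅ n : ℤ, ⨅ _ : n < 0, (adjoint (out n)).ker
  refine ⟨H, inferInstance, inferInstance, inferInstance, X, ⟨?_⟩⟩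
  exact
  { shift := U
    inc := inc
    out := out
    shift_inc n u := hU n _
    shift_out n v := hU n _
    adjoint_inc_inc m n u := ext_inner_right ℂ fun w => by
      rw [adjoint_inner_left, hinc, hinc, hφ, inner_toeplitzKernel]
      split_ifs <;> simp
    adjoint_out_out m n v := ext_inner_right ℂ fun w => by
      rw [adjoint_inner_left, hout, hout, hφ, inner_toeplitzKernel]
      split_ifs <;> simp
    adjoint_out_inc m n u := ext_inner_right ℂ fun w => by
      rw [adjoint_inner_left, hinc, hout, hφ, inner_toeplitzKernel]
      simp
    causal := hcausal
    total h hinc_zero hout_zero := htotal h fun n v => by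
      have hv : φ n v = out n v.fst + inc n v.snd := by
        rw [hinc, hout, ← map_add, ← WithLp.toLp_add, Prod.mk_add_mk, add_zero, zero_add]
        rfl
      rw [hv, inner_add_left, ← adjoint_inner_right, ← adjoint_inner_right (inc n), hinc_zero,
        hout_zero, inner_zero_right, inner_zero_right, add_zero]
    mem_state x := by
      simp only [X, Submodule.mem_inf, Submodule.mem_iInf, LinearMap.mem_ker, coe_coe] }

end Existence

section SchurFunctions

variable {E F : Type*} [NormedAddCommGroup E] [InnerProductSpace ℂ E] [CompleteSpace E]
  [NormedAddCommGroup F] [InnerProductSpace ℂ F] [CompleteSpace F]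

theorem exists_isContractiveSymbol_hasSum {θ : ℂ → E →L[ℂ] F}
    (hθ : DifferentiableOn ℂ θ (ball (0 : ℂ) 1)) (hcontr : ∀ z ∈ ball (0 : ℂ) 1, ‖θ z‖ ≤ 1)
    (h0 : θ 0 = 0) :
    ∃ a : ℕ → E →L[ℂ] F, IsContractiveSymbol (Function.extend Nat.cast a 0 : ℤ → E →L[ℂ] F) ∧
      ∀ z ∈ ball (0 : ℂ) 1, HasSum (fun k => z ^ (k + 1) • a k) (θ z) := by
  have hmaps : Set.MapsTo θ (ball 0 1) (closedBall (θ 0) 1) := fun z hz => by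
    simpa only [h0, mem_closedBall_zero_iff] using hcontr z hz
  have hschwarz (z : ℂ) (hz : z ∈ ball (0 : ℂ) 1) : ‖dslope θ 0 z‖ ≤ 1 := by
    simpa only [div_one] using Complex.norm_dslope_le_div_of_mapsTo_ball hθ hmaps hz
  have hdslope : DifferentiableOn ℂ (dslope θ 0) (ball 0 1) :=
    (Complex.differentiableOn_dslope (ball_mem_nhds 0 one_pos)).2 hθ
  have hp := hasFPowerSeriesOnBall_cauchyPowerSeries (r := 2⁻¹) (R := 1) hdslope
    (by norm_num) (inv_lt_one_of_one_lt₀ one_lt_two)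
  refine ⟨_, isContractiveSymbol_coeff hp hschwarz, fun z hz => ?_⟩
  have hz' : z ∈ eball (0 : ℂ) 1 := by
    simpa [← ENNReal.ofReal_one, eball_ofReal] using hz
  have hsum := (hp.hasSum_sub hz').const_smul z
  simp only [sub_zero, FormalMultilinearSeries.apply_eq_pow_smul_coeff, smul_smul,
    ← pow_succ'] at hsum
  have hz_smul : z • dslope θ 0 z = θ z := by
    simpa only [sub_zero, h0] using sub_smul_dslope θ 0 z
  rwa [hz_smul] at hsum

end SchurFunctions

section Realization

variable {E F X X' : Type*} [NormedAddCommGroup E] [InnerProductSpace ℂ E] [CompleteSpace E]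
  [NormedAddCommGroup F] [InnerProductSpace ℂ F] [CompleteSpace F]
  [NormedAddCommGroup X] [InnerProductSpace ℂ X] [CompleteSpace X]
  [NormedAddCommGroup X'] [InnerProductSpace ℂ X'] [CompleteSpace X']
  {θ : ℂ → E →L[ℂ] F} {A : X →L[ℂ] X} {B : E →L[ℂ] X} {C : X →L[ℂ] F} {D : E →L[ℂ] F}
  {A' : X' →L[ℂ] X'} {B' : E →L[ℂ] X'} {C' : X' →L[ℂ] F} {D' : E →L[ℂ] F}

theorem isCCConservativeRealization_iff_hasSum :
    IsCCConservativeRealization θ X A B C D ↔ IsUnitaryOp (blockOp A B C D) ∧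
      CloselyConnected1 A B C ∧
      ∀ z ∈ ball (0 : ℂ) 1, HasSum (fun k => z ^ (k + 1) • markov A B C D k) (θ z) := by
  refine and_congr_right fun hunitary => and_congr_right fun _ => forall₂_congr fun z hz => ?_
  have hzA : ‖z • A‖ < 1 := by
    rw [norm_smul]
    exact mul_lt_one_of_nonneg_of_lt_one_left (norm_nonneg z) (mem_ball_zero_iff.1 hz)
      hunitary.norm_le_one
  have hsum : HasSum (fun k => z ^ (k + 1) • markov A B C D k)
      (z • D + (z • C) ∘L Ring.inverse (1 - z • A) ∘L (z • B)) := by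
    simpa only [smul_smul, ← pow_succ', smul_add, comp_smul, smul_comp] using
      (hasSum_smul_markov A B C D hzA).const_smul z
  rw [and_iff_right (isUnit_one_sub_of_norm_lt_one hzA)]
  exact ⟨fun h => h ▸ hsum, fun h => h.unique hsum⟩

theorem IsCCConservativeRealization.markov_eq (h : IsCCConservativeRealization θ X A B C D)
    (h' : IsCCConservativeRealization θ X' A' B' C' D') :
    markov A B C D = markov A' B' C' D' :=
  have hball : ball (0 : ℂ) 1 ∈ nhds 0 := ball_mem_nhds 0 one_pos
  eq_of_hasSum_pow_succ_smul
    (Filter.mem_of_superset hball (isCCConservativeRealization_iff_hasSum.1 h).2.2)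
    (Filter.mem_of_superset hball (isCCConservativeRealization_iff_hasSum.1 h').2.2)

theorem IsCCConservativeRealization.exists_unitary_similarity
    (h : IsCCConservativeRealization θ X A B C D)
    (h' : IsCCConservativeRealization θ X' A' B' C' D') :
    D' = D ∧ ∃ U : X ≃ₗᵢ[ℂ] X',
      (∀ x, A' (U x) = U (A x)) ∧ (∀ u, B' u = U (B u)) ∧ ∀ x, C' (U x) = C x :=
  ⟨congrFun (h'.markov_eq h) 0,
    exists_unitary_similarity_of_markov_eq h.1 h.2.1 h'.1 h'.2.1 (h.markov_eq h')⟩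

theorem CloselyConnected1.separableSpace [TopologicalSpace.SeparableSpace E]
    [TopologicalSpace.SeparableSpace F] (h : CloselyConnected1 A B C) :
    TopologicalSpace.SeparableSpace X := by
  let M (w : List Bool) : X →L[ℂ] X := (w.map fun b => cond b A (adjoint A)).prod
  have hsep : TopologicalSpace.IsSeparable
      (⋃ w, Set.range (M w ∘L B) ∪ Set.range (M w ∘L adjoint C)) :=
    .iUnion fun w => (TopologicalSpace.isSeparable_range (map_continuous _)).union
      (TopologicalSpace.isSeparable_range (map_continuous _))
  rw [← TopologicalSpace.isSeparable_univ_iff, ← Submodule.top_coe (R := ℂ), ← h]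
  refine (hsep.mono ?_).span.closure
  rintro _ ⟨w, y, ⟨u, rfl⟩ | ⟨v, rfl⟩, rfl⟩
  · exact Set.mem_iUnion.2 ⟨w, .inl ⟨u, rfl⟩⟩
  · exact Set.mem_iUnion.2 ⟨w, .inr ⟨v, rfl⟩⟩

universe u v

theorem exists_isCCConservativeRealization {E : Type u} {F : Type v}
    [NormedAddCommGroup E] [InnerProductSpace ℂ E] [CompleteSpace E]
    [NormedAddCommGroup F] [InnerProductSpace ℂ F] [CompleteSpace F] {θ : ℂ → E →L[ℂ] F}
    (hθ : DifferentiableOn ℂ θ (ball (0 : ℂ) 1)) (hcontr : ∀ z ∈ ball (0 : ℂ) 1, ‖θ z‖ ≤ 1)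
    (h0 : θ 0 = 0) :
    ∃ (X : Type (max u v)) (_ : NormedAddCommGroup X) (_ : InnerProductSpace ℂ X)
      (_ : CompleteSpace X) (A : X →L[ℂ] X) (B : E →L[ℂ] X) (C : X →L[ℂ] F) (D : E →L[ℂ] F),
      IsCCConservativeRealization θ X A B C D := by
  obtain ⟨a, ha, hsum⟩ := exists_isContractiveSymbol_hasSum hθ hcontr h0
  obtain ⟨H, _, _, _, X, ⟨σ⟩⟩ := exists_scatteringSystem ha fun n hn =>
    Function.extend_apply' _ _ _ fun ⟨k, hk⟩ => by lia
  have : CompleteSpace X := σ.isClosed_state.completeSpace_coe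
  refine ⟨X, inferInstance, inferInstance, inferInstance, σ.mainOp, σ.inputOp, σ.outputOp, _,
    isCCConservativeRealization_iff_hasSum.2
      ⟨σ.isUnitaryOp_blockOp, σ.closelyConnected1, fun z hz => ?_⟩⟩
  simpa only [σ.markov_eq, Nat.cast_injective.extend_apply] using hsum z hz

end Realization

theorem exists_unique_closely_connected_conservative_realization_general.{u, v, w}
    {Nm : Type u} {Np : Type v}
    [NormedAddCommGroup Nm] [InnerProductSpace ℂ Nm] [CompleteSpace Nm]
    [NormedAddCommGroup Np] [InnerProductSpace ℂ Np] [CompleteSpace Np]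
    (θ : ℂ → (Nm →L[ℂ] Np))
    (hθ : DifferentiableOn ℂ θ (ball (0 : ℂ) 1))
    (hcontr : ∀ z ∈ ball (0 : ℂ) 1, ‖θ z‖ ≤ 1)
    (h0 : θ 0 = 0) :
    ∃ (X : Type (max u v)) (_ : NormedAddCommGroup X) (_ : InnerProductSpace ℂ X)
      (_ : CompleteSpace X)
      (A : X →L[ℂ] X) (B : Nm →L[ℂ] X) (C : X →L[ℂ] Np) (D : Nm →L[ℂ] Np),
      IsCCConservativeRealization θ X A B C D ∧
      ∀ (X' : Type w) (_ : NormedAddCommGroup X') (_ : InnerProductSpace ℂ X')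
        (_ : CompleteSpace X')
        (A' : X' →L[ℂ] X') (B' : Nm →L[ℂ] X') (C' : X' →L[ℂ] Np) (D' : Nm →L[ℂ] Np),
        IsCCConservativeRealization θ X' A' B' C' D' →
          D' = D ∧ ∃ U : X ≃ₗᵢ[ℂ] X',
            (∀ x : X, A' (U x) = U (A x)) ∧ (∀ u : Nm, B' u = U (B u)) ∧
            (∀ x : X, C' (U x) = C x) := by
  obtain ⟨X, _, _, _, A, B, C, D, h⟩ := exists_isCCConservativeRealization hθ hcontr h0
  exact ⟨X, _, _, _, A, B, C, D, h, fun X' _ _ _ A' B' C' D' h' => h.exists_unitary_similarity h'⟩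

/-- every `θ ∈ S⁰(N⁻, N⁺)` admits a closely connected conservative realization,
and this realization is unique up to unitary similarity. -/
theorem exists_unique_closely_connected_conservative_realization.{u, v}
    {Nm Np : Type u}
    [NormedAddCommGroup Nm] [InnerProductSpace ℂ Nm] [CompleteSpace Nm]
    [TopologicalSpace.SeparableSpace Nm]
    [NormedAddCommGroup Np] [InnerProductSpace ℂ Np] [CompleteSpace Np]
    [TopologicalSpace.SeparableSpace Np]
    (θ : ℂ → (Nm →L[ℂ] Np))
    (hθ : DifferentiableOn ℂ θ (ball (0 : ℂ) 1))
    (hcontr : ∀ z ∈ ball (0 : ℂ) 1, ‖θ z‖ ≤ 1)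
    (h0 : θ 0 = 0) :
    ∃ (X : Type u) (_ : NormedAddCommGroup X) (_ : InnerProductSpace ℂ X)
      (_ : CompleteSpace X) (_ : TopologicalSpace.SeparableSpace X)
      (A : X →L[ℂ] X) (B : Nm →L[ℂ] X) (C : X →L[ℂ] Np) (D : Nm →L[ℂ] Np),
      IsCCConservativeRealization θ X A B C D ∧
      ∀ (X' : Type v) (_ : NormedAddCommGroup X') (_ : InnerProductSpace ℂ X')
        (_ : CompleteSpace X') (_ : TopologicalSpace.SeparableSpace X')
        (A' : X' →L[ℂ] X') (B' : Nm →L[ℂ] X') (C' : X' →L[ℂ] Np) (D' : Nm →L[ℂ] Np),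
        IsCCConservativeRealization θ X' A' B' C' D' →
          D' = D ∧ ∃ U : X ≃ₗᵢ[ℂ] X',
            (∀ x : X, A' (U x) = U (A x)) ∧ (∀ u : Nm, B' u = U (B u)) ∧
            (∀ x : X, C' (U x) = C x) := by
  obtain ⟨X, _, _, _, A, B, C, D, h, hunique⟩ :=
    exists_unique_closely_connected_conservative_realization_general θ hθ hcontr h0
  exact ⟨X, _, _, _, h.2.1.separableSpace, A, B, C, D, h, fun X' _ _ _ _ => hunique X' _ _ _⟩
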